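/- For every real damping parameter ω, the supremum over θ ∈ T^H of |1 - ω·g_v(θ)| is at least 7/25, and this supremum equals 7/25 if and only if ω = 24/25. In other words, the optimal LFA smoothing factor of the element-wise Vanka relaxation for the five-point Laplacian is 7/25, uniquely attained at ω = 24/25. -/

import Mathlib

open Real Set

/-- The high-frequency set `T^H`. -/
def TH : Set (ℝ × ℝ) :=
  (Ioc (-(π/2)) (3*π/2) ×ˢ Ioc (-(π/2)) (3*π/2)) \
    (Ioc (-(π/2)) (π/2) ×ˢ Ioc (-(π/2)) (π/2))

/-- Scaled symbol of the five-point discrete Laplacian. -/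
noncomputable def chi (θ : ℝ × ℝ) : ℝ := 4 - 2 * Real.cos θ.1 - 2 * Real.cos θ.2

/-- Scaled symbol of the product of the element-wise Vanka operator and the discrete Laplacian. -/
noncomputable def gv (θ : ℝ × ℝ) : ℝ :=
  chi θ * (7 + 2 * Real.cos θ.1 + 2 * Real.cos θ.2 + Real.cos θ.1 * Real.cos θ.2) / 24

/-!
For a symbol with range in `[a, b]`, `0 < a`, whose endpoints are attained, convexity of
`t ↦ |1 - ω t|` makes the smoothing factor equal to `max |1 - ω a| |1 - ω b|`. The weighted average
of `1 - ω a` and `-(1 - ω b)` with weights `b` and `a` is `(b - a) / (a + b)` for every `ω`, so this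
is a lower bound, and it is reached only where the two quantities balance, at `ω = 2 / (a + b)`.
On the high frequencies one of the two cosines is nonpositive, and `gv` ranges between `3/4`
(at cosines `1` and `0`) and `4/3` (at cosines `-1` and `-1`).
-/

section Convex

variable {𝕜 β : Type*} [Field 𝕜] [LinearOrder 𝕜] [IsStrictOrderedRing 𝕜]
  [AddCommGroup β] [LinearOrder β] [IsOrderedAddMonoid β] [Module 𝕜 β] [IsStrictOrderedModule 𝕜 β]
  {s : Set 𝕜} {a b : 𝕜} {φ : 𝕜 → β}

theorem isGreatest_image_max_of_convexOn (hφ : ConvexOn 𝕜 (Icc a b) φ) (ha : IsLeast s a)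
    (hb : IsGreatest s b) : IsGreatest (φ '' s) (max (φ a) (φ b)) := by
  have hab : a ≤ b := ha.2 hb.1
  refine ⟨?_, ?_⟩
  · rcases max_choice (φ a) (φ b) with h | h <;> rw [h]
    exacts [mem_image_of_mem φ ha.1, mem_image_of_mem φ hb.1]
  · rintro _ ⟨t, ht, rfl⟩
    exact hφ.le_max_of_mem_Icc (left_mem_Icc.2 hab) (right_mem_Icc.2 hab) ⟨ha.2 ht, hb.2 ht⟩

end Convex

section SmoothingFactor

variable {α : Type*} {g : α → ℝ} {s : Set α} {a b : ℝ}

/-- The smoothing factor on the frequency set `s` of a relaxation scheme with damping parameter `ω`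
whose preconditioned operator has symbol `g`, as used in local Fourier analysis. As a real supremum
it takes the junk value `0` if the error symbol is unbounded on `s`, or if `s` is empty. -/
noncomputable def smoothingFactor (g : α → ℝ) (s : Set α) (ω : ℝ) : ℝ :=
  sSup ((fun θ => |1 - ω * g θ|) '' s)

theorem convexOn_abs_one_sub_mul (ω : ℝ) : ConvexOn ℝ univ fun t : ℝ => |1 - ω * t| := by
  refine ⟨convex_univ, fun x _ y _ p q hp hq hpq => ?_⟩
  calc |1 - ω * (p • x + q • y)| = |p * (1 - ω * x) + q * (1 - ω * y)| := by
        rw [smul_eq_mul, smul_eq_mul]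
        congr 1
        linear_combination -hpq
    _ ≤ |p * (1 - ω * x)| + |q * (1 - ω * y)| := abs_add_le _ _
    _ = p • |1 - ω * x| + q • |1 - ω * y| := by
        rw [abs_mul, abs_mul, abs_of_nonneg hp, abs_of_nonneg hq, smul_eq_mul, smul_eq_mul]

theorem smoothingFactor_eq_max (ha : IsLeast (g '' s) a) (hb : IsGreatest (g '' s) b) (ω : ℝ) :
    smoothingFactor g s ω = max |1 - ω * a| |1 - ω * b| := by
  have hφ := (convexOn_abs_one_sub_mul ω).subset (subset_univ _) (convex_Icc a b)
  rw [← (isGreatest_image_max_of_convexOn hφ ha hb).csSup_eq, image_image, smoothingFactor]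

theorem sub_div_add_le_max_abs_one_sub_mul (ha : 0 < a) (hb : 0 ≤ b) (ω : ℝ) :
    (b - a) / (a + b) ≤ max |1 - ω * a| |1 - ω * b| := by
  rw [div_le_iff₀ (by positivity)]
  calc b - a = b * (1 - ω * a) + a * -(1 - ω * b) := by ring
    _ ≤ b * max |1 - ω * a| |1 - ω * b| + a * max |1 - ω * a| |1 - ω * b| := by
      gcongr
      exacts [le_max_of_le_left (le_abs_self _), le_max_of_le_right (neg_le_abs _)]
    _ = max |1 - ω * a| |1 - ω * b| * (a + b) := by ring

theorem max_abs_one_sub_mul_eq_sub_div_add_iff (ha : 0 < a) (hab : a ≤ b) {ω : ℝ} :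
    max |1 - ω * a| |1 - ω * b| = (b - a) / (a + b) ↔ ω = 2 / (a + b) := by
  have hb : 0 < b := ha.trans_le hab
  constructor
  · intro h
    have h_left : 1 - ω * a ≤ (b - a) / (a + b) :=
      (le_abs_self _).trans ((le_max_left _ _).trans h.le)
    have h_right : -(1 - ω * b) ≤ (b - a) / (a + b) :=
      (neg_le_abs _).trans ((le_max_right _ _).trans h.le)
    have h_le : ω * b ≤ 2 / (a + b) * b := by
      calc ω * b ≤ 1 + (b - a) / (a + b) := by linarith
        _ = 2 / (a + b) * b := by field_simp; ring
    have h_ge : 2 / (a + b) * a ≤ ω * a := by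
      calc 2 / (a + b) * a = 1 - (b - a) / (a + b) := by field_simp; ring
        _ ≤ ω * a := by linarith
    exact le_antisymm (le_of_mul_le_mul_right h_le hb) (le_of_mul_le_mul_right h_ge ha)
  · rintro rfl
    have h_left : 1 - 2 / (a + b) * a = (b - a) / (a + b) := by field_simp; ring
    have h_right : 1 - 2 / (a + b) * b = -((b - a) / (a + b)) := by field_simp; ring
    rw [h_left, h_right, abs_neg, max_self, abs_of_nonneg (div_nonneg (by linarith) (by linarith))]

theorem sub_div_add_le_smoothingFactor (ha : IsLeast (g '' s) a) (hb : IsGreatest (g '' s) b)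
    (ha_pos : 0 < a) (ω : ℝ) : (b - a) / (a + b) ≤ smoothingFactor g s ω := by
  rw [smoothingFactor_eq_max ha hb]
  exact sub_div_add_le_max_abs_one_sub_mul ha_pos (ha_pos.le.trans (ha.2 hb.1)) ω

theorem smoothingFactor_eq_sub_div_add_iff (ha : IsLeast (g '' s) a) (hb : IsGreatest (g '' s) b)
    (ha_pos : 0 < a) {ω : ℝ} : smoothingFactor g s ω = (b - a) / (a + b) ↔ ω = 2 / (a + b) := by
  rw [smoothingFactor_eq_max ha hb]
  exact max_abs_one_sub_mul_eq_sub_div_add_iff ha_pos (ha.2 hb.1)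

end SmoothingFactor

section VankaSymbol

variable {θ : ℝ × ℝ}

theorem gv_swap (θ : ℝ × ℝ) : gv θ.swap = gv θ := by
  simp only [gv, chi, Prod.fst_swap, Prod.snd_swap]
  ring

theorem gv_le_four_thirds (θ : ℝ × ℝ) : gv θ ≤ 4 / 3 := by
  rw [gv, chi]
  set x := cos θ.1
  set y := cos θ.2
  have h_chi : 0 ≤ 4 - 2 * x - 2 * y := by linarith [cos_le_one θ.1, cos_le_one θ.2]
  have h_add : 0 ≤ 2 + x + y := by linarith [neg_one_le_cos θ.1, neg_one_le_cos θ.2]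
  have h_amgm : x * y ≤ (x + y) ^ 2 / 4 := by linarith [four_mul_le_sq_add x y]
  calc (4 - 2 * x - 2 * y) * (7 + 2 * x + 2 * y + x * y) / 24
      ≤ (4 - 2 * x - 2 * y) * (7 + 2 * x + 2 * y + (x + y) ^ 2 / 4) / 24 := by gcongr
    _ = 4 / 3 - (2 + x + y) ^ 3 / 48 := by ring
    _ ≤ 4 / 3 := sub_le_self _ (by positivity)

theorem three_fourths_le_gv_of_cos_snd_nonpos (h : cos θ.2 ≤ 0) : 3 / 4 ≤ gv θ := by
  rw [gv, chi]
  set x := cos θ.1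
  set y := cos θ.2
  have h_one_sub : 0 ≤ 1 - x := sub_nonneg.2 (cos_le_one θ.1)
  have h_one_add : 0 ≤ 1 + x := by linarith [neg_one_le_cos θ.1]
  have h_two_add : 0 ≤ 2 + y := by linarith [neg_one_le_cos θ.2]
  have h_neg : 0 ≤ -y := neg_nonneg.2 h
  -- The product is concave in `x`: the first term of the bracket is its excess over the chord
  -- through `x = ±1`, the other two interpolate the values there.
  calc 3 / 4
      ≤ 3 / 4 + (2 * (2 + y) * ((1 - x) * (1 + x)) + 3 * (-y * (2 + y)) * (1 + x) +
          (6 + -y * (2 + y)) * (1 - x)) / 24 := le_add_of_nonneg_right (by positivity)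
    _ = (4 - 2 * x - 2 * y) * (7 + 2 * x + 2 * y + x * y) / 24 := by ring

theorem cos_nonpos_of_mem_TH (hθ : θ ∈ TH) : cos θ.1 ≤ 0 ∨ cos θ.2 ≤ 0 := by
  obtain ⟨⟨⟨h_fst, h_fst'⟩, h_snd, h_snd'⟩, h_not_low⟩ := hθ
  rcases le_or_gt θ.1 (π / 2) with h_low | h_high
  · have h_high : π / 2 < θ.2 := by
      by_contra! h
      exact h_not_low ⟨⟨h_fst, h_low⟩, h_snd, h⟩
    exact .inr (cos_nonpos_of_pi_div_two_le_of_le h_high.le (by linarith))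
  · exact .inl (cos_nonpos_of_pi_div_two_le_of_le h_high.le (by linarith))

theorem three_fourths_le_gv_of_mem_TH (hθ : θ ∈ TH) : 3 / 4 ≤ gv θ := by
  rcases cos_nonpos_of_mem_TH hθ with h_fst | h_snd
  · rw [← gv_swap]
    exact three_fourths_le_gv_of_cos_snd_nonpos h_fst
  · exact three_fourths_le_gv_of_cos_snd_nonpos h_snd

theorem mem_TH_of_pi_div_two_lt_snd (h_fst : θ.1 ∈ Ioc (-(π / 2)) (3 * π / 2))
    (h_snd : θ.2 ∈ Ioc (π / 2) (3 * π / 2)) : θ ∈ TH :=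
  ⟨⟨h_fst, by linarith [h_snd.1, pi_pos], h_snd.2⟩, fun h_low => h_low.2.2.not_gt h_snd.1⟩

theorem isLeast_gv_image_TH : IsLeast (gv '' TH) (3 / 4) := by
  -- `π / 2` also has zero cosine, but `(0, π / 2)` is a low frequency.
  refine ⟨⟨(0, 3 * π / 2), mem_TH_of_pi_div_two_lt_snd ?_ ?_, ?_⟩, ?_⟩
  · constructor <;> linarith [pi_pos]
  · constructor <;> linarith [pi_pos]
  · have h_cos : cos (3 * π / 2) = 0 := cos_eq_zero_iff.2 ⟨1, by push_cast; ring⟩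
    norm_num [gv, chi, h_cos]
  · rintro _ ⟨θ, hθ, rfl⟩
    exact three_fourths_le_gv_of_mem_TH hθ

theorem isGreatest_gv_image_TH : IsGreatest (gv '' TH) (4 / 3) := by
  refine ⟨⟨(π, π), mem_TH_of_pi_div_two_lt_snd ?_ ?_, ?_⟩, ?_⟩
  · constructor <;> linarith [pi_pos]
  · constructor <;> linarith [pi_pos]
  · norm_num [gv, chi]
  · rintro _ ⟨θ, -, rfl⟩
    exact gv_le_four_thirds θ

end VankaSymbol

theorem stmt_5 (ω : ℝ) :
    7/25 ≤ sSup ((fun θ => |1 - ω * gv θ|) '' TH) ∧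
      (sSup ((fun θ => |1 - ω * gv θ|) '' TH) = 7/25 ↔ ω = 24/25) := by
  change 7 / 25 ≤ smoothingFactor gv TH ω ∧ (smoothingFactor gv TH ω = 7 / 25 ↔ ω = 24 / 25)
  have h_factor : (7 / 25 : ℝ) = (4 / 3 - 3 / 4) / (3 / 4 + 4 / 3) := by norm_num
  have h_damping : (24 / 25 : ℝ) = 2 / (3 / 4 + 4 / 3) := by norm_num
  have h_pos : (0 : ℝ) < 3 / 4 := by norm_num
  rw [h_factor, h_damping]
  exact ⟨sub_div_add_le_smoothingFactor isLeast_gv_image_TH isGreatest_gv_image_TH h_pos ω,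
    smoothingFactor_eq_sub_div_add_iff isLeast_gv_image_TH isGreatest_gv_image_TH h_pos⟩
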